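/- Suppose μ_{n,i} = (1−κ_{n,i})·μ̃_{n,i} + κ_{n,i}·ν_{n,i}, where κ_{n,i} ∈ [0,1], μ̃_{n,i} ≪ P_{n,i}, and ν_{n,i}(N_{n,i}) = 1 for some P_{n,i}-null set N_{n,i}. Let ε̃_{n,i} = ε_{n,i}(1−κ_{n,i})/(1−ε_{n,i}κ_{n,i}), let Q̃_{n,i}, Q̃_(n), T̃_n be defined as Q_{n,i}, Q_(n), T_n with (μ̃_{n,i}, ε̃_{n,i}) in place of (μ_{n,i}, ε_{n,i}), and suppose T̃_n converges in distribution to ξ̃1 under P_(n) and to ξ̃2 under Q̃_(n) (values in [−∞,∞]). If Σ_{i=1}^{k_n} ε_{n,i}κ_{n,i} → c ∈ [0,∞], then T_n converges in distribution under P_(n) to ξ1 = ξ̃1 − c and under Q_(n) to ξ2 = ξ̃2 + X, where X is independent of ξ̃2 with P(X = −c) = e^{−c} and P(X = +∞) = 1 − e^{−c}; equivalently, the limiting laws satisfy ν1 = ν̃1 * δ_{−c} and ν2 = e^{−c}·(ν̃2 * δ_{−c}) + (1−e^{−c})·δ_{+∞}. In particular, if c = ∞, or if ξ̃1 ≡ −∞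 and ξ̃2 ≡ +∞, then ξ1 ≡ −∞ and ξ2 ≡ +∞. -/

import Mathlib

open MeasureTheory Filter Topology

noncomputable section

/-- Mixture `Q = (1-e)·P + e·μ`. -/
def Qmix {α : Type*} [MeasurableSpace α] (P μ : Measure α) (e : ℝ) : Measure α :=
  (ENNReal.ofReal (1 - e)) • P + (ENNReal.ofReal e) • μ

/-- Product null measure `P_(n) = ⊗_{i<k_n} P_{n,i}`. -/
def Pprod {α : Type*} [MeasurableSpace α] (P : ℕ → ℕ → Measure α) (k : ℕ → ℕ) (n : ℕ) :
    Measure (Fin (k n) → α) :=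
  Measure.pi (fun i => P n i)

/-- Product alternative measure `Q_(n) = ⊗_{i<k_n} Q_{n,i}`. -/
def Qprod {α : Type*} [MeasurableSpace α] (P μ : ℕ → ℕ → Measure α) (ε : ℕ → ℕ → ℝ)
    (k : ℕ → ℕ) (n : ℕ) : Measure (Fin (k n) → α) :=
  Measure.pi (fun i => Qmix (P n i) (μ n i) (ε n i))

/-- Extended likelihood ratio `dQ/dP` with values in `[0,∞]` (equal to `+∞` on the
`P`-singular part of `Q`), computed via densities w.r.t. `P + Q`. -/
def elr {α : Type*} [MeasurableSpace α] (Q P : Measure α) (a : α) : ENNReal :=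
  Q.rnDeriv (P + Q) a / P.rnDeriv (P + Q) a

/-- Log-likelihood ratio statistic `T_n = Σ_{i<k_n} log(dQ_{n,i}/dP_{n,i})(y_i)`,
with values in `[−∞,∞]`. -/
def Tstat {α : Type*} [MeasurableSpace α] (P μ : ℕ → ℕ → Measure α) (ε : ℕ → ℕ → ℝ)
    (k : ℕ → ℕ) (n : ℕ) (y : Fin (k n) → α) : EReal :=
  ∑ i : Fin (k n), ENNReal.log (elr (Qmix (P n i) (μ n i) (ε n i)) (P n i) (y i))

/-- Law of `T_n` under the null `P_(n)`. -/
def lawP {α : Type*} [MeasurableSpace α] (P μ : ℕ → ℕ → Measure α) (ε : ℕ → ℕ → ℝ)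
    (k : ℕ → ℕ) (n : ℕ) : Measure EReal :=
  (Pprod P k n).map (Tstat P μ ε k n)

/-- Law of `T_n` under the alternative `Q_(n)`. -/
def lawQ {α : Type*} [MeasurableSpace α] (P μ : ℕ → ℕ → Measure α) (ε : ℕ → ℕ → ℝ)
    (k : ℕ → ℕ) (n : ℕ) : Measure EReal :=
  (Qprod P μ ε k n).map (Tstat P μ ε k n)

/-- Weak convergence of a sequence of measures (convergence in distribution):
integrals of bounded continuous functions converge. -/
def WeakLim {β : Type*} [MeasurableSpace β] [TopologicalSpace β]
    (μs : ℕ → Measure β) (ν : Measure β) : Prop :=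
  ∀ f : BoundedContinuousFunction β ℝ,
    Tendsto (fun n => ∫ x, f x ∂(μs n)) atTop (nhds (∫ x, f x ∂ν))

end

lemma s7_elr_meas {α : Type*} [MeasurableSpace α] (Q P : Measure α) : Measurable (elr Q P) := by
  unfold elr
  exact (Measure.measurable_rnDeriv _ _).div (Measure.measurable_rnDeriv _ _)

lemma s7_elr_ae {α : Type*} [MeasurableSpace α] (Q P : Measure α) [IsFiniteMeasure Q]
    [IsFiniteMeasure P] : elr Q P =ᵐ[P] Q.rnDeriv P := by
  have h := Measure.rnDeriv_eq_div_rnDeriv_add Q P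
  filter_upwards [h] with x hx
  rw [hx]
  simp [elr, add_comm]

lemma s7_elr_lint {α : Type*} [MeasurableSpace α] (Q P : Measure α) [IsProbabilityMeasure Q]
    [IsFiniteMeasure P] : ∫⁻ x, elr Q P x ∂P ≤ 1 := by
  rw [lintegral_congr_ae (s7_elr_ae Q P)]
  exact Measure.lintegral_rnDeriv_le.trans (by simp)

lemma s7_elr_ne_zero {α : Type*} [MeasurableSpace α] (Q P : Measure α) [IsFiniteMeasure Q]
    [IsFiniteMeasure P] : ∀ᵐ x ∂Q, elr Q P x ≠ 0 := by
  have hac : Q ≪ P + Q := Measure.AbsolutelyContinuous.rfl.add_right' _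
  have h1 := Measure.rnDeriv_pos hac
  have h2 := hac.ae_le (Measure.rnDeriv_ne_top P (P + Q))
  filter_upwards [h1, h2] with x hx hx2
  simp only [elr, ne_eq, ENNReal.div_eq_zero_iff, not_or]
  exact ⟨hx.ne', hx2⟩

lemma s7_elr_top {α : Type*} [MeasurableSpace α] (Q P : Measure α) [IsFiniteMeasure Q]
    [IsFiniteMeasure P] (N : Set α) (hN : MeasurableSet N) (hPN : P N = 0) :
    ∀ᵐ x ∂Q, x ∈ N → elr Q P x = ⊤ := by
  have hac : Q ≪ P + Q := Measure.AbsolutelyContinuous.rfl.add_right' _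
  have h1 := Measure.rnDeriv_pos hac
  have h3 : ∫⁻ x in N, P.rnDeriv (P + Q) x ∂(P + Q) = 0 := by
    have := Measure.setLIntegral_rnDeriv_le (μ := P) (ν := P + Q) N
    rw [hPN] at this
    exact le_antisymm this zero_le
  rw [lintegral_eq_zero_iff (Measure.measurable_rnDeriv _ _)] at h3
  have h4 := hac.ae_le ((ae_restrict_iff' hN).1 h3)
  filter_upwards [h1, h4] with x hx hx4 hxN
  have := hx4 hxN
  simp only [Pi.zero_apply] at this
  rw [elr, this]
  exact ENNReal.div_zero hx.ne'

lemma s7_elr_mix {α : Type*} [MeasurableSpace α] (Q P Qt ν : Measure α) [IsFiniteMeasure Qt]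
    [IsFiniteMeasure P] [IsFiniteMeasure ν] (a b : ℝ) (hQ : Q = ENNReal.ofReal a • Qt + ENNReal.ofReal b • ν)
    (N : Set α) (hN : MeasurableSet N) (hPN : P N = 0) (hνN : ν Nᶜ = 0) :
    elr Q P =ᵐ[P] fun x => ENNReal.ofReal a * elr Qt P x := by
  have f1 : IsFiniteMeasure (ENNReal.ofReal a • Qt) := Measure.smul_finite _ ENNReal.ofReal_ne_top
  have f2 : IsFiniteMeasure (ENNReal.ofReal b • ν) := Measure.smul_finite _ ENNReal.ofReal_ne_top
  have f3 : IsFiniteMeasure Q := by rw [hQ]; infer_instance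
  have hs : (ENNReal.ofReal b • ν) ⟂ₘ P := ⟨Nᶜ, hN.compl, by simp [hνN], by simpa using hPN⟩
  have h2 := Measure.rnDeriv_add_of_mutuallySingular (ENNReal.ofReal a • Qt) (ENNReal.ofReal b • ν) P hs
  have h3 := Measure.rnDeriv_smul_left_of_ne_top Qt P (r := ENNReal.ofReal a) ENNReal.ofReal_ne_top
  rw [← hQ] at h2
  filter_upwards [s7_elr_ae Q P, s7_elr_ae Qt P, h2, h3] with x e1 e2 e3 e4
  rw [e1, e2, e3, e4]; simp

lemma s7_pi_smul {α : Type*} [MeasurableSpace α] {m : ℕ} (Q : Fin m → Measure α)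
    [∀ i, IsFiniteMeasure (Q i)] (a : Fin m → ℝ) :
    Measure.pi (fun i => ENNReal.ofReal (a i) • Q i) = (∏ i, ENNReal.ofReal (a i)) • Measure.pi Q := by
  have f1 : ∀ i, IsFiniteMeasure (ENNReal.ofReal (a i) • Q i) :=
    fun i => Measure.smul_finite _ ENNReal.ofReal_ne_top
  refine Measure.pi_eq fun s hs => ?_
  simp [Measure.pi_pi, Finset.prod_mul_distrib]

lemma s7_lint_prod {α : Type*} [MeasurableSpace α] {m : ℕ} (P : Fin m → Measure α)
    [∀ i, IsProbabilityMeasure (P i)] (g : Fin m → α → ENNReal) (hg : ∀ i, Measurable (g i)) :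
    ∫⁻ y, ∏ i, g i (y i) ∂(Measure.pi P) = ∏ i, ∫⁻ x, g i x ∂(P i) := by
  have hi := ProbabilityTheory.iIndepFun_pi (μ := P) (X := g) (fun i => (hg i).aemeasurable)
  have := ProbabilityTheory.lintegral_prod_eq_prod_lintegral_of_indepFun Finset.univ (μ := Measure.pi P)
    (fun i (y : Fin m → α) => g i (y i)) hi (fun i => (hg i).comp (measurable_pi_apply i))
  rw [this]
  refine Finset.prod_congr rfl fun i _ => ?_
  exact (measurePreserving_eval P i).lintegral_comp (hg i)

lemma s7_log_prod {m : ℕ} (g : Fin m → ENNReal) : ∑ i, ENNReal.log (g i) = ENNReal.log (∏ i, g i) := by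
  induction (Finset.univ : Finset (Fin m)) using Finset.induction_on with
  | empty => simp
  | insert i s hi ih => rw [Finset.sum_insert hi, Finset.prod_insert hi, ENNReal.log_mul_add, ih]

/-- Log-likelihood ratio of product measures. -/
noncomputable def s7T {α : Type*} [MeasurableSpace α] {m : ℕ} (Q P : Fin m → Measure α)
    (y : Fin m → α) : EReal := ∑ i, ENNReal.log (elr (Q i) (P i) (y i))

lemma s7T_eq {α : Type*} [MeasurableSpace α] {m : ℕ} (Q P : Fin m → Measure α)
    (y : Fin m → α) : s7T Q P y = ENNReal.log (∏ i, elr (Q i) (P i) (y i)) := s7_log_prod _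

lemma s7T_meas {α : Type*} [MeasurableSpace α] {m : ℕ} (Q P : Fin m → Measure α) :
    Measurable (s7T Q P) := by
  have : s7T Q P = fun y => ENNReal.log (∏ i, elr (Q i) (P i) (y i)) := by
    funext y; exact s7T_eq Q P y
  rw [this]
  refine Measurable.ennreal_log (Finset.measurable_prod _ fun i _ => ?_)
  exact (s7_elr_meas _ _).comp (measurable_pi_apply i)

lemma s7T_exp {α : Type*} [MeasurableSpace α] {m : ℕ} (Q P : Fin m → Measure α)
    [∀ i, IsProbabilityMeasure (P i)] [∀ i, IsProbabilityMeasure (Q i)] :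
    ∫⁻ x, EReal.exp x ∂((Measure.pi P).map (s7T Q P)) ≤ 1 := by
  rw [lintegral_map EReal.measurable_exp (s7T_meas Q P)]
  simp_rw [s7T_eq, ENNReal.exp_log]
  rw [s7_lint_prod P (fun i => elr (Q i) (P i)) (fun i => s7_elr_meas _ _)]
  exact Finset.prod_le_one' fun i _ => s7_elr_lint _ _

lemma s7T_shift {α : Type*} [MeasurableSpace α] {m : ℕ} (Q Qt P : Fin m → Measure α)
    (a : Fin m → ℝ) (ha : ∀ i, a i < 1) (y : Fin m → α)
    (h : ∀ i, elr (Q i) (P i) (y i) = ENNReal.ofReal (1 - a i) * elr (Qt i) (P i) (y i)) :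
    s7T Q P y = s7T Qt P y + ((Real.log (∏ i, (1 - a i)) : ℝ) : EReal) := by
  rw [s7T_eq, s7T_eq, Finset.prod_congr rfl (fun i _ => h i), Finset.prod_mul_distrib,
    ENNReal.log_mul_add, add_comm, ← ENNReal.ofReal_prod_of_nonneg (fun i _ => by linarith [ha i]),
    ENNReal.log_ofReal_of_pos (Finset.prod_pos fun i _ => by linarith [ha i])]

lemma s7_P {α : Type*} [MeasurableSpace α] {m : ℕ} (Q Qt P ν : Fin m → Measure α)
    [∀ i, IsProbabilityMeasure (P i)] [∀ i, IsProbabilityMeasure (Qt i)]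
    [∀ i, IsProbabilityMeasure (ν i)]
    (N : Fin m → Set α) (hN : ∀ i, MeasurableSet (N i)) (hPN : ∀ i, P i (N i) = 0)
    (hνN : ∀ i, ν i (N i)ᶜ = 0)
    (a : Fin m → ℝ) (ha : ∀ i, a i < 1)
    (hQ : ∀ i, Q i = ENNReal.ofReal (1 - a i) • Qt i + ENNReal.ofReal (a i) • ν i)
    (f : BoundedContinuousFunction EReal ℝ) :
    ∫ x, f x ∂((Measure.pi P).map (s7T Q P)) =
      ∫ x, f (x + ((Real.log (∏ i, (1 - a i)) : ℝ) : EReal)) ∂((Measure.pi P).map (s7T Qt P)) := by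
  have hm : Measurable (fun x : EReal => x + ((Real.log (∏ i, (1 - a i)) : ℝ) : EReal)) := by
    fun_prop
  rw [integral_map (s7T_meas Q P).aemeasurable
      f.continuous.measurable.aestronglyMeasurable,
    integral_map (f := fun x : EReal => f (x + ((Real.log (∏ i, (1 - a i)) : ℝ) : EReal)))
      (s7T_meas Qt P).aemeasurable
      (f.continuous.measurable.comp hm).aestronglyMeasurable]
  refine integral_congr_ae ?_
  have h : ∀ᵐ y ∂(Measure.pi P), ∀ i,
      elr (Q i) (P i) (y i) = ENNReal.ofReal (1 - a i) * elr (Qt i) (P i) (y i) := by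
    refine eventually_all.2 fun i => ?_
    exact Measure.tendsto_eval_ae_ae.eventually
      (s7_elr_mix (Q i) (P i) (Qt i) (ν i) _ _ (hQ i) (N i) (hN i) (hPN i) (hνN i))
  filter_upwards [h] with y hy
  rw [s7T_shift Q Qt P a ha y hy]

lemma s7_Q {α : Type*} [MeasurableSpace α] {m : ℕ} (Q Qt P ν : Fin m → Measure α)
    [∀ i, IsProbabilityMeasure (P i)] [∀ i, IsProbabilityMeasure (Qt i)]
    [∀ i, IsProbabilityMeasure (ν i)] [∀ i, IsProbabilityMeasure (Q i)]
    (hac : ∀ i, Qt i ≪ P i)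
    (N : Fin m → Set α) (hN : ∀ i, MeasurableSet (N i)) (hPN : ∀ i, P i (N i) = 0)
    (hνN : ∀ i, ν i (N i)ᶜ = 0)
    (a : Fin m → ℝ) (ha : ∀ i, a i < 1)
    (hQ : ∀ i, Q i = ENNReal.ofReal (1 - a i) • Qt i + ENNReal.ofReal (a i) • ν i)
    (f : BoundedContinuousFunction EReal ℝ) :
    ∫ x, f x ∂((Measure.pi Q).map (s7T Q P)) =
      (∏ i, (1 - a i)) * ∫ x, f (x + ((Real.log (∏ i, (1 - a i)) : ℝ) : EReal))
        ∂((Measure.pi Qt).map (s7T Qt P)) + (1 - ∏ i, (1 - a i)) * f ⊤ := by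
  have hm : Measurable (fun x : EReal => x + ((Real.log (∏ i, (1 - a i)) : ℝ) : EReal)) := by
    fun_prop
  have hp : 0 < ∏ i, (1 - a i) := Finset.prod_pos fun i _ => by linarith [ha i]
  rw [integral_map (s7T_meas Q P).aemeasurable
      f.continuous.measurable.aestronglyMeasurable,
    integral_map (f := fun x : EReal => f (x + ((Real.log (∏ i, (1 - a i)) : ℝ) : EReal)))
      (s7T_meas Qt P).aemeasurable
      (f.continuous.measurable.comp hm).aestronglyMeasurable]
  set S : Set (Fin m → α) := Set.univ.pi fun i => (N i)ᶜ with hS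
  have hSm : MeasurableSet S := MeasurableSet.univ_pi fun i => (hN i).compl
  have hres : (Measure.pi Q).restrict S = ENNReal.ofReal (∏ i, (1 - a i)) • Measure.pi Qt := by
    rw [hS, Measure.restrict_pi_pi, ENNReal.ofReal_prod_of_nonneg (fun i _ => by linarith [ha i]),
      ← s7_pi_smul]
    congr 1
    funext i
    rw [hQ i, Measure.restrict_add, Measure.restrict_smul, Measure.restrict_smul,
      Measure.restrict_eq_zero.2 (hνN i), smul_zero, add_zero]
    congr 1
    refine Measure.restrict_eq_self_of_ae_mem ?_
    have : Qt i (N i) = 0 := hac i (hPN i)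
    rw [ae_iff]; simpa using this
  have hQS : (Measure.pi Q).real S = ∏ i, (1 - a i) := by
    have : (Measure.pi Q) S = ENNReal.ofReal (∏ i, (1 - a i)) := by
      rw [← Measure.restrict_apply_univ, hres]; simp
    rw [measureReal_def, this, ENNReal.toReal_ofReal hp.le]
  have hint : Integrable (fun y => f (s7T Q P y)) (Measure.pi Q) := by
    refine Integrable.of_bound (f.continuous.measurable.comp (s7T_meas Q P)).aestronglyMeasurable
      ‖f‖ (ae_of_all _ fun y => f.norm_coe_le_norm _)
  rw [← integral_add_compl hSm hint, hres]
  congr 1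
  · rw [integral_smul_measure, ENNReal.toReal_ofReal hp.le, smul_eq_mul]
    congr 1
    refine integral_congr_ae ?_
    have h : ∀ᵐ y ∂(Measure.pi Qt), ∀ i,
        elr (Q i) (P i) (y i) = ENNReal.ofReal (1 - a i) * elr (Qt i) (P i) (y i) := by
      refine eventually_all.2 fun i => ?_
      exact Measure.tendsto_eval_ae_ae.eventually ((hac i).ae_le
        (s7_elr_mix (Q i) (P i) (Qt i) (ν i) _ _ (hQ i) (N i) (hN i) (hPN i) (hνN i)))
    filter_upwards [h] with y hy
    rw [s7T_shift Q Qt P a ha y hy]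
  · have h1 : ∀ᵐ y ∂(Measure.pi Q), ∀ i, elr (Q i) (P i) (y i) ≠ 0 :=
      eventually_all.2 fun i => Measure.tendsto_eval_ae_ae.eventually (s7_elr_ne_zero (Q i) (P i))
    have h2 : ∀ᵐ y ∂(Measure.pi Q), ∀ i, y i ∈ N i → elr (Q i) (P i) (y i) = ⊤ :=
      eventually_all.2 fun i => Measure.tendsto_eval_ae_ae.eventually
        (s7_elr_top (Q i) (P i) (N i) (hN i) (hPN i))
    have h3 : ∫ y in Sᶜ, f (s7T Q P y) ∂(Measure.pi Q) = ∫ y in Sᶜ, f ⊤ ∂(Measure.pi Q) := by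
      refine setIntegral_congr_ae hSm.compl ?_
      filter_upwards [h1, h2] with y hy1 hy2 hyS
      congr 1
      have : ∃ i, y i ∈ N i := by
        by_contra hcon
        push Not at hcon
        exact hyS (fun i _ => hcon i)
      obtain ⟨i, hi⟩ := this
      rw [s7T_eq, ENNReal.log_eq_top_iff]
      rw [← Finset.mul_prod_erase _ _ (Finset.mem_univ i), hy2 i hi]
      exact ENNReal.top_mul (Finset.prod_ne_zero_iff.2 fun j _ => hy1 j)
    rw [h3, setIntegral_const, smul_eq_mul, measureReal_compl hSm, hQS]
    simp

lemma s7_cont_add : Continuous (fun z : ℝ × EReal => z.2 + (z.1 : EReal)) := by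
  rw [continuous_iff_continuousAt]
  intro z
  have h := EReal.continuousAt_add (p := (z.2, (z.1 : EReal))) (Or.inr (EReal.coe_ne_bot _))
    (Or.inr (EReal.coe_ne_top _))
  have h2 : ContinuousAt (fun z : ℝ × EReal => (z.2, (z.1 : EReal))) z := by
    have : Continuous (fun z : ℝ × EReal => (z.2, (z.1 : EReal))) :=
      continuous_snd.prodMk (continuous_coe_real_ereal.comp continuous_fst)
    exact this.continuousAt
  exact ContinuousAt.comp (f := fun z : ℝ × EReal => (z.2, (z.1 : EReal)))
    (g := fun p : EReal × EReal => p.1 + p.2) h h2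

/-- Shifted bounded continuous function. -/
noncomputable def s7shift (f : BoundedContinuousFunction EReal ℝ) :
    C(ℝ, C(EReal, ℝ)) :=
  ContinuousMap.curry ⟨fun z : ℝ × EReal => f (z.2 + (z.1 : EReal)),
    f.continuous.comp s7_cont_add⟩

lemma s7shift_apply (f : BoundedContinuousFunction EReal ℝ) (s : ℝ) (x : EReal) :
    s7shift f s x = f (x + (s : EReal)) := rfl

lemma s7_lim1 (A : ℕ → Measure EReal) (ν : Measure EReal)
    (hA : ∀ᶠ n in atTop, IsProbabilityMeasure (A n)) (hw : WeakLim A ν) (s : ℕ → ℝ) (s0 : ℝ)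
    (hs : Tendsto s atTop (𝓝 s0)) (f : BoundedContinuousFunction EReal ℝ) :
    Tendsto (fun n => ∫ x, f (x + (s n : EReal)) ∂(A n)) atTop
      (𝓝 (∫ x, f (x + (s0 : EReal)) ∂ν)) := by
  have h1 := hw (BoundedContinuousFunction.mkOfCompact (s7shift f s0))
  simp only [BoundedContinuousFunction.mkOfCompact_apply, s7shift_apply] at h1
  have h2 : Tendsto (fun n => ‖s7shift f (s n) - s7shift f s0‖) atTop (𝓝 0) := by
    have := ((s7shift f).continuous.tendsto s0).comp hs
    exact tendsto_iff_norm_sub_tendsto_zero.1 this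
  have h3 : Tendsto (fun n => ∫ x, f (x + (s n : EReal)) ∂(A n) -
      ∫ x, f (x + (s0 : EReal)) ∂(A n)) atTop (𝓝 0) := by
    refine squeeze_zero_norm' ?_ h2
    filter_upwards [hA] with n hn
    have hi : ∀ t : ℝ, Integrable (fun x => f (x + (t : EReal))) (A n) := fun t =>
      Integrable.of_bound (s7shift f t).continuous.measurable.aestronglyMeasurable
        ‖f‖ (ae_of_all _ fun y => f.norm_coe_le_norm _)
    rw [← integral_sub (hi _) (hi _)]
    have := norm_integral_le_of_norm_le_const (μ := A n)
      (f := fun x => f (x + (s n : EReal)) - f (x + (s0 : EReal)))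
      (C := ‖s7shift f (s n) - s7shift f s0‖)
      (ae_of_all _ fun x => (s7shift f (s n) - s7shift f s0).norm_coe_le_norm x)
    simpa using this
  have := h3.add h1
  simpa using this

lemma s7_bot_bound (f : BoundedContinuousFunction EReal ℝ) (δ : ℝ) (hδ : 0 < δ) :
    ∃ M : ℝ, 0 ≤ M ∧ ∀ x : EReal, ENNReal.ofReal ‖f x - f ⊥‖ ≤
      ENNReal.ofReal δ + ENNReal.ofReal M * EReal.exp x := by
  have h1 : ∀ᶠ x in 𝓝 (⊥ : EReal), ‖f x - f ⊥‖ < δ := by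
    have := Metric.tendsto_nhds.1 (f.continuous.tendsto ⊥) δ hδ
    simpa [dist_eq_norm] using this
  obtain ⟨K, hK⟩ := EReal.mem_nhds_bot_iff.1 h1
  refine ⟨2 * ‖f‖ * Real.exp (-K), by positivity, fun x => ?_⟩
  by_cases hx : x < K
  · exact (ENNReal.ofReal_le_ofReal (hK hx).le).trans le_self_add
  · push Not at hx
    refine le_trans ?_ le_add_self
    have h2 : EReal.exp (K : EReal) ≤ EReal.exp x := EReal.exp_monotone hx
    calc ENNReal.ofReal ‖f x - f ⊥‖ ≤ ENNReal.ofReal (2 * ‖f‖) := by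
          refine ENNReal.ofReal_le_ofReal ((norm_sub_le _ _).trans ?_)
          linarith [f.norm_coe_le_norm x, f.norm_coe_le_norm ⊥]
      _ = ENNReal.ofReal (2 * ‖f‖ * Real.exp (-K)) * EReal.exp (K : EReal) := by
          rw [EReal.exp_coe, ← ENNReal.ofReal_mul (by positivity), mul_assoc, ← Real.exp_add]
          simp
      _ ≤ _ := by gcongr

lemma s7_lim2 (A : ℕ → Measure EReal)
    (hA : ∀ᶠ n in atTop, IsProbabilityMeasure (A n))
    (hE : ∀ᶠ n in atTop, ∫⁻ x, EReal.exp x ∂(A n) ≤ 1) (p : ℕ → ℝ)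
    (hp : ∀ᶠ n in atTop, 0 < p n)
    (hp0 : Tendsto p atTop (𝓝 0)) (f : BoundedContinuousFunction EReal ℝ) :
    Tendsto (fun n => ∫ x, f (x + ((Real.log (p n) : ℝ) : EReal)) ∂(A n)) atTop (𝓝 (f ⊥)) := by
  rw [Metric.tendsto_nhds]
  intro δ hδ
  obtain ⟨M, hM, hb⟩ := s7_bot_bound f (δ / 2) (by linarith)
  have hlt : ∀ᶠ n in atTop, M * p n < δ / 2 := by
    have := hp0.const_mul M
    rw [mul_zero] at this
    exact this.eventually_lt_const (by linarith)
  filter_upwards [hA, hE, hp, hlt] with n hn hEn hpn hln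
  set s := Real.log (p n) with hs
  have hi : Integrable (fun x => f (x + (s : EReal))) (A n) :=
      Integrable.of_bound (s7shift f s).continuous.measurable.aestronglyMeasurable
        ‖f‖ (ae_of_all _ fun y => f.norm_coe_le_norm _)
  have e1 : ∫ x, f (x + (s : EReal)) ∂(A n) - f ⊥ = ∫ x, (f (x + (s : EReal)) - f ⊥) ∂(A n) := by
    rw [integral_sub hi (integrable_const _)]; simp
  rw [dist_eq_norm, e1]
  have e2 : ENNReal.ofReal ‖∫ x, (f (x + (s : EReal)) - f ⊥) ∂(A n)‖ ≤
      ENNReal.ofReal (δ / 2 + M * p n) := by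
    rw [ofReal_norm]
    refine (enorm_integral_le_lintegral_enorm _).trans ?_
    calc ∫⁻ x, ‖f (x + (s : EReal)) - f ⊥‖ₑ ∂(A n)
        ≤ ∫⁻ x, (ENNReal.ofReal (δ / 2) + ENNReal.ofReal (M * p n) * EReal.exp x) ∂(A n) := by
          refine lintegral_mono fun x => ?_
          have := hb (x + (s : EReal))
          rw [ofReal_norm, EReal.exp_add, EReal.exp_coe, hs, Real.exp_log hpn] at this
          refine this.trans (le_of_eq ?_)
          rw [ENNReal.ofReal_mul hM]
          ring
      _ = ENNReal.ofReal (δ / 2) + ENNReal.ofReal (M * p n) * ∫⁻ x, EReal.exp x ∂(A n) := by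
          rw [lintegral_add_left measurable_const, lintegral_const_mul _ EReal.measurable_exp]
          simp
      _ ≤ ENNReal.ofReal (δ / 2) + ENNReal.ofReal (M * p n) * 1 := by gcongr
      _ = _ := by rw [mul_one, ENNReal.ofReal_add (by linarith) (by positivity)]
  have := (ENNReal.ofReal_le_ofReal_iff (by positivity)).1 e2
  linarith

/-- The relation between the laws at a fixed stage. -/
def s7Rel (lP lQ lPt lQt : Measure EReal) (p : ℝ) : Prop :=
  IsProbabilityMeasure lPt ∧ IsProbabilityMeasure lQt ∧ 0 < p ∧ p ≤ 1 ∧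
  ∫⁻ x, EReal.exp x ∂lPt ≤ 1 ∧
  (∀ f : BoundedContinuousFunction EReal ℝ,
    ∫ x, f x ∂lP = ∫ x, f (x + ((Real.log p : ℝ) : EReal)) ∂lPt) ∧
  (∀ f : BoundedContinuousFunction EReal ℝ,
    ∫ x, f x ∂lQ = p * ∫ x, f (x + ((Real.log p : ℝ) : EReal)) ∂lQt + (1 - p) * f ⊤)

lemma s7_case_pos (lP lQ lPt lQt : ℕ → Measure EReal) (p : ℕ → ℝ) (ν1 ν2 : Measure EReal)
    (hR : ∀ᶠ n in atTop, s7Rel (lP n) (lQ n) (lPt n) (lQt n) (p n))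
    (h1 : WeakLim lPt ν1) (h2 : WeakLim lQt ν2) (p0 : ℝ) (hp0 : 0 < p0)
    (hp : Tendsto p atTop (𝓝 p0)) (f : BoundedContinuousFunction EReal ℝ) :
    Tendsto (fun n => ∫ x, f x ∂(lP n)) atTop
      (𝓝 (∫ x, f (x + ((Real.log p0 : ℝ) : EReal)) ∂ν1)) ∧
    Tendsto (fun n => ∫ x, f x ∂(lQ n)) atTop
      (𝓝 (p0 * ∫ x, f (x + ((Real.log p0 : ℝ) : EReal)) ∂ν2 + (1 - p0) * f ⊤)) := by
  have hl : Tendsto (fun n => Real.log (p n)) atTop (𝓝 (Real.log p0)) := hp.log hp0.ne'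
  have g1 := s7_lim1 lPt ν1 (hR.mono fun n h => h.1) h1 _ _ hl f
  have g2 := s7_lim1 lQt ν2 (hR.mono fun n h => h.2.1) h2 _ _ hl f
  constructor
  · refine g1.congr' ?_
    filter_upwards [hR] with n hn
    exact (hn.2.2.2.2.2.1 f).symm
  · refine ((hp.mul g2).add ((tendsto_const_nhds.sub hp).mul_const (f ⊤))).congr' ?_
    filter_upwards [hR] with n hn
    exact (hn.2.2.2.2.2.2 f).symm

lemma s7_case_zero (lP lQ lPt lQt : ℕ → Measure EReal) (p : ℕ → ℝ)
    (hR : ∀ᶠ n in atTop, s7Rel (lP n) (lQ n) (lPt n) (lQt n) (p n))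
    (hp : Tendsto p atTop (𝓝 0)) (f : BoundedContinuousFunction EReal ℝ) :
    Tendsto (fun n => ∫ x, f x ∂(lP n)) atTop (𝓝 (f ⊥)) ∧
    Tendsto (fun n => ∫ x, f x ∂(lQ n)) atTop (𝓝 (f ⊤)) := by
  have g1 := s7_lim2 lPt (hR.mono fun n h => h.1) (hR.mono fun n h => h.2.2.2.2.1) p
    (hR.mono fun n h => h.2.2.1) hp f
  constructor
  · refine g1.congr' ?_
    filter_upwards [hR] with n hn
    exact (hn.2.2.2.2.2.1 f).symm
  · have g2 : Tendsto (fun n => p n * ∫ x, f (x + ((Real.log (p n) : ℝ) : EReal)) ∂(lQt n))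
        atTop (𝓝 0) := by
      refine squeeze_zero_norm' (a := fun n => p n * ‖f‖) ?_ (by simpa using hp.mul_const ‖f‖)
      filter_upwards [hR] with n hn
      have := hn.2.1
      rw [norm_mul, Real.norm_of_nonneg hn.2.2.1.le]
      refine mul_le_mul_of_nonneg_left ?_ hn.2.2.1.le
      have := norm_integral_le_of_norm_le_const (μ := lQt n)
        (f := fun x => f (x + ((Real.log (p n) : ℝ) : EReal))) (C := ‖f‖)
        (ae_of_all _ fun x => f.norm_coe_le_norm _)
      simpa using this
    have g3 := g2.add ((tendsto_const_nhds (x := (1 : ℝ)).sub hp).mul_const (f ⊤))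
    simp only [sub_zero, one_mul, zero_add] at g3
    refine g3.congr' ?_
    filter_upwards [hR] with n hn
    exact (hn.2.2.2.2.2.2 f).symm

lemma s7_dirac (ν : Measure EReal) [IsProbabilityMeasure ν] (b : EReal) (h : ν {b} = 1)
    (g : EReal → ℝ) : ∫ x, g x ∂ν = g b := by
  have hae : ∀ᵐ x ∂ν, x = b := by
    have := (prob_compl_eq_zero_iff (μ := ν) (measurableSet_singleton b)).2 h
    rw [ae_iff]
    exact this
  rw [integral_congr_ae (g := fun _ => g b) (by filter_upwards [hae] with x hx; rw [hx])]
  simp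

lemma s7_case_deg (lP lQ lPt lQt : ℕ → Measure EReal) (p : ℕ → ℝ) (ν1 ν2 : Measure EReal)
    [IsProbabilityMeasure ν1] [IsProbabilityMeasure ν2]
    (hR : ∀ᶠ n in atTop, s7Rel (lP n) (lQ n) (lPt n) (lQt n) (p n))
    (h1 : WeakLim lPt ν1) (h2 : WeakLim lQt ν2) (d1 : ν1 {⊥} = 1) (d2 : ν2 {⊤} = 1)
    (f : BoundedContinuousFunction EReal ℝ) :
    Tendsto (fun n => (∫ x, f x ∂(lP n), ∫ x, f x ∂(lQ n))) atTop (𝓝 (f ⊥, f ⊤)) := by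
  refine tendsto_of_subseq_tendsto fun ns hns => ?_
  have hI : ∃ᶠ n in atTop, p (ns n) ∈ Set.Icc (0 : ℝ) 1 :=
    ((hns.eventually hR).mono fun n h => ⟨h.2.2.1.le, h.2.2.2.1⟩).frequently
  obtain ⟨p0, hp0, φ, hφ, hlim⟩ := isCompact_Icc.tendsto_subseq' hI
  refine ⟨φ, ?_⟩
  have hc : Tendsto (fun n => ns (φ n)) atTop atTop := hns.comp hφ.tendsto_atTop
  have hR' := hc.eventually hR
  rcases hp0.1.eq_or_lt with h0 | h0
  · rw [← h0] at hlim
    have := s7_case_zero _ _ _ _ _ hR' hlim f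
    exact this.1.prodMk_nhds this.2
  · have := s7_case_pos _ _ _ _ _ ν1 ν2 hR' (fun f => (h1 f).comp hc) (fun f => (h2 f).comp hc)
      p0 h0 hlim f
    rw [s7_dirac ν1 ⊥ d1, s7_dirac ν2 ⊤ d2] at this
    simp only [EReal.bot_add, EReal.top_add_coe] at this
    have e : p0 * f ⊤ + (1 - p0) * f ⊤ = f ⊤ := by ring
    rw [e] at this
    exact this.1.prodMk_nhds this.2

lemma s7_Qmix_prob {α : Type*} [MeasurableSpace α] (P μ : Measure α) [IsProbabilityMeasure P]
    [IsProbabilityMeasure μ] (e : ℝ) (h0 : 0 ≤ e) (h1 : e ≤ 1) :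
    IsProbabilityMeasure (Qmix P μ e) := by
  constructor
  simp only [Qmix, Measure.add_apply, Measure.smul_apply, measure_univ, smul_eq_mul, mul_one]
  rw [← ENNReal.ofReal_add (by linarith) h0]
  simp

lemma s7_rel {α : Type*} [MeasurableSpace α] {m : ℕ} (P μ μt νs : Fin m → Measure α)
    (ε κ : Fin m → ℝ) (N : Fin m → Set α)
    [∀ i, IsProbabilityMeasure (P i)] [∀ i, IsProbabilityMeasure (μ i)]
    [∀ i, IsProbabilityMeasure (μt i)] [∀ i, IsProbabilityMeasure (νs i)]
    (hε : ∀ i, ε i ∈ Set.Icc (0 : ℝ) 1) (hε1 : ∀ i, ε i < 1)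
    (hκ : ∀ i, κ i ∈ Set.Icc (0 : ℝ) 1) (hac : ∀ i, μt i ≪ P i)
    (hnull : ∀ i, MeasurableSet (N i) ∧ P i (N i) = 0 ∧ νs i (N i) = 1)
    (hdecomp : ∀ i, μ i =
      (ENNReal.ofReal (1 - κ i)) • μt i + (ENNReal.ofReal (κ i)) • νs i) :
    s7Rel
      ((Measure.pi P).map (s7T (fun i => Qmix (P i) (μ i) (ε i)) P))
      ((Measure.pi fun i => Qmix (P i) (μ i) (ε i)).map (s7T (fun i => Qmix (P i) (μ i) (ε i)) P))
      ((Measure.pi P).map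
        (s7T (fun i => Qmix (P i) (μt i) (ε i * (1 - κ i) / (1 - ε i * κ i))) P))
      ((Measure.pi fun i => Qmix (P i) (μt i) (ε i * (1 - κ i) / (1 - ε i * κ i))).map
        (s7T (fun i => Qmix (P i) (μt i) (ε i * (1 - κ i) / (1 - ε i * κ i))) P))
      (∏ i, (1 - ε i * κ i)) := by
  have ha1 : ∀ i, ε i * κ i < 1 := fun i => by
    nlinarith [hε1 i, (hε i).1, (hκ i).1, (hκ i).2]
  have ha0 : ∀ i, 0 ≤ ε i * κ i := fun i => mul_nonneg (hε i).1 (hκ i).1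
  have het0 : ∀ i, 0 ≤ ε i * (1 - κ i) / (1 - ε i * κ i) := fun i =>
    div_nonneg (mul_nonneg (hε i).1 (by linarith [(hκ i).2])) (by linarith [ha1 i])
  have het1 : ∀ i, ε i * (1 - κ i) / (1 - ε i * κ i) ≤ 1 := fun i => by
    rw [div_le_one (by linarith [ha1 i])]
    nlinarith [hε1 i]
  have hQp : ∀ i, IsProbabilityMeasure (Qmix (P i) (μ i) (ε i)) := fun i =>
    s7_Qmix_prob _ _ _ (hε i).1 (hε i).2
  have hQtp : ∀ i, IsProbabilityMeasure (Qmix (P i) (μt i) (ε i * (1 - κ i) / (1 - ε i * κ i))) :=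
    fun i => s7_Qmix_prob _ _ _ (het0 i) (het1 i)
  have hνN : ∀ i, νs i (N i)ᶜ = 0 := fun i =>
    (prob_compl_eq_zero_iff (hnull i).1).2 (hnull i).2.2
  have hQtac : ∀ i, Qmix (P i) (μt i) (ε i * (1 - κ i) / (1 - ε i * κ i)) ≪ P i := by
    intro i
    refine Measure.AbsolutelyContinuous.add_left ?_ ?_
    · exact Measure.smul_absolutelyContinuous
    · exact Measure.smul_absolutelyContinuous.trans (hac i)
  have hQ : ∀ i, Qmix (P i) (μ i) (ε i) =
      ENNReal.ofReal (1 - ε i * κ i) • Qmix (P i) (μt i) (ε i * (1 - κ i) / (1 - ε i * κ i)) +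
        ENNReal.ofReal (ε i * κ i) • νs i := by
    intro i
    have hpos : 0 < 1 - ε i * κ i := by linarith [ha1 i]
    rw [hdecomp i]
    simp only [Qmix, smul_add, smul_smul]
    rw [← ENNReal.ofReal_mul hpos.le, ← ENNReal.ofReal_mul hpos.le, ← ENNReal.ofReal_mul (hε i).1,
      ← ENNReal.ofReal_mul (hε i).1, mul_div_cancel₀ _ hpos.ne', ← add_assoc]
    have e : (1 - ε i * κ i) * (1 - ε i * (1 - κ i) / (1 - ε i * κ i)) = 1 - ε i := by
      rw [mul_one_sub, mul_div_cancel₀ _ hpos.ne']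
      ring
    rw [e]
  refine ⟨Measure.isProbabilityMeasure_map (s7T_meas _ _).aemeasurable,
    Measure.isProbabilityMeasure_map (s7T_meas _ _).aemeasurable,
    Finset.prod_pos fun i _ => by linarith [ha1 i],
    Finset.prod_le_one (fun i _ => by linarith [ha1 i]) (fun i _ => by linarith [ha0 i]),
    s7T_exp _ _, fun f => ?_, fun f => ?_⟩
  · exact s7_P _ _ P νs N (fun i => (hnull i).1) (fun i => (hnull i).2.1) hνN
      (fun i => ε i * κ i) ha1 hQ f
  · exact s7_Q _ _ P νs hQtac N (fun i => (hnull i).1) (fun i => (hnull i).2.1) hνN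
      (fun i => ε i * κ i) ha1 hQ f

lemma s7_prod_upper {m : ℕ} (a : Fin m → ℝ) (ha : ∀ i, a i < 1) :
    ∏ i, (1 - a i) ≤ Real.exp (-∑ i, a i) := by
  rw [← Finset.sum_neg_distrib, Real.exp_sum]
  refine Finset.prod_le_prod (fun i _ => by linarith [ha i]) fun i _ => ?_
  linarith [Real.add_one_le_exp (-a i)]

lemma s7_prod_lower {m : ℕ} (a : Fin m → ℝ) (M : ℝ) (hM : M < 1) (h0 : ∀ i, 0 ≤ a i)
    (ha : ∀ i, a i ≤ M) :
    Real.exp (-((∑ i, a i) / (1 - M))) ≤ ∏ i, (1 - a i) := by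
  rw [Finset.sum_div, ← Finset.sum_neg_distrib, Real.exp_sum]
  refine Finset.prod_le_prod (fun i _ => (Real.exp_pos _).le) fun i _ => ?_
  have hp : 0 < 1 - a i := by linarith [ha i]
  rw [← Real.le_log_iff_exp_le hp]
  refine le_trans ?_ (Real.one_sub_inv_le_log_of_pos hp)
  have e : 1 - (1 - a i)⁻¹ = -(a i / (1 - a i)) := by field_simp; ring
  rw [e, neg_le_neg_iff]
  exact div_le_div_of_nonneg_left (h0 i) (by linarith) (by linarith [ha i])
noncomputable section

/-- violation of absolute continuity: with the Lebesgue decomposition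
`μ_{n,i} = (1−κ_{n,i})·μ̃_{n,i} + κ_{n,i}·ν_{n,i}` and `ε̃_{n,i} = ε_{n,i}(1−κ_{n,i})/(1−ε_{n,i}κ_{n,i})`,
the limits of `T_n` are obtained from those of `T̃_n` by a shift by `−c` under the null and
additionally mixing with mass `1 − e^{−c}` at `+∞` under the alternative, where
`c = lim Σ_i ε_{n,i}κ_{n,i}`; if `c = ∞`, or if `ξ̃1 ≡ −∞` and `ξ̃2 ≡ +∞`, then
`ξ1 ≡ −∞` and `ξ2 ≡ +∞`. -/
theorem statement7 {α : Type*} [MeasurableSpace α]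
    (k : ℕ → ℕ) (P μ μt νs : ℕ → ℕ → Measure α) (ε κ : ℕ → ℕ → ℝ)
    (Nset : ℕ → ℕ → Set α)
    (hk : Tendsto k atTop atTop)
    (hP : ∀ n i, IsProbabilityMeasure (P n i))
    (hμ : ∀ n i, IsProbabilityMeasure (μ n i))
    (hμt : ∀ n i, IsProbabilityMeasure (μt n i))
    (hνs : ∀ n i, IsProbabilityMeasure (νs n i))
    (hε : ∀ n i, ε n i ∈ Set.Icc (0 : ℝ) 1)
    (hεmax : Tendsto (fun n => ⨆ i : Fin (k n), ε n i) atTop (nhds 0))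
    -- Lebesgue decomposition of μ_{n,i}
    (hκ : ∀ n i, κ n i ∈ Set.Icc (0 : ℝ) 1)
    (hactilde : ∀ n i, μt n i ≪ P n i)
    (hnull : ∀ n i, MeasurableSet (Nset n i) ∧ P n i (Nset n i) = 0 ∧ νs n i (Nset n i) = 1)
    (hdecomp : ∀ n i, μ n i =
      (ENNReal.ofReal (1 - κ n i)) • μt n i + (ENNReal.ofReal (κ n i)) • νs n i)
    -- limits of T̃_n (built from μ̃ and ε̃)
    (νt1 νt2 : Measure EReal)
    (hνt1 : IsProbabilityMeasure νt1) (hνt2 : IsProbabilityMeasure νt2)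
    (hwtP : WeakLim (lawP P μt (fun n i => ε n i * (1 - κ n i) / (1 - ε n i * κ n i)) k) νt1)
    (hwtQ : WeakLim (lawQ P μt (fun n i => ε n i * (1 - κ n i) / (1 - ε n i * κ n i)) k) νt2) :
    -- conclusion, covering c ∈ [0,∞) and c = ∞
    (∀ c : ℝ,
      Tendsto (fun n => ∑ i ∈ Finset.range (k n), ε n i * κ n i) atTop (nhds c) →
      WeakLim (lawP P μ ε k) (νt1.map (fun x : EReal => x + ((-c : ℝ) : EReal))) ∧
      WeakLim (lawQ P μ ε k)
        ((ENNReal.ofReal (Real.exp (-c))) •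
            (νt2.map (fun x : EReal => x + ((-c : ℝ) : EReal))) +
          (ENNReal.ofReal (1 - Real.exp (-c))) • Measure.dirac (⊤ : EReal))) ∧
    ((Tendsto (fun n => ∑ i ∈ Finset.range (k n), ε n i * κ n i) atTop atTop ∨
        (νt1 {⊥} = 1 ∧ νt2 {⊤} = 1)) →
      WeakLim (lawP P μ ε k) (Measure.dirac (⊥ : EReal)) ∧
      WeakLim (lawQ P μ ε k) (Measure.dirac (⊤ : EReal))) := by
  have hsup : ∀ n (i : Fin (k n)), ε n i ≤ ⨆ i : Fin (k n), ε n i := fun n i =>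
    le_ciSup (f := fun i : Fin (k n) => ε n i) (Set.finite_range _).bddAbove i
  have hsmall : ∀ᶠ n in atTop, (⨆ i : Fin (k n), ε n i) < 1 :=
    hεmax.eventually_lt_const one_pos
  set p : ℕ → ℝ := fun n => ∏ i : Fin (k n), (1 - ε n i * κ n i) with hpdef
  have hR : ∀ᶠ n in atTop, s7Rel (lawP P μ ε k n) (lawQ P μ ε k n)
      (lawP P μt (fun n i => ε n i * (1 - κ n i) / (1 - ε n i * κ n i)) k n)
      (lawQ P μt (fun n i => ε n i * (1 - κ n i) / (1 - ε n i * κ n i)) k n) (p n) := by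
    filter_upwards [hsmall] with n hn
    exact s7_rel (fun i : Fin (k n) => P n i) (fun i => μ n i) (fun i => μt n i)
      (fun i => νs n i) (fun i => ε n i) (fun i => κ n i) (fun i => Nset n i)
      (fun i => hε n i) (fun i => (hsup n i).trans_lt hn) (fun i => hκ n i)
      (fun i => hactilde n i) (fun i => hnull n i) (fun i => hdecomp n i)
  have hsum : ∀ n, ∑ i ∈ Finset.range (k n), ε n i * κ n i =
      ∑ i : Fin (k n), ε n i * κ n i := fun n =>
    (Fin.sum_univ_eq_sum_range (fun i => ε n i * κ n i) (k n)).symm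
  have ha0 : ∀ n (i : Fin (k n)), 0 ≤ ε n i * κ n i := fun n i =>
    mul_nonneg (hε n i).1 (hκ n i).1
  have haM : ∀ n (i : Fin (k n)), ε n i * κ n i ≤ ⨆ i : Fin (k n), ε n i := fun n i =>
    (mul_le_of_le_one_right (hε n i).1 (hκ n i).2).trans (hsup n i)
  have hup : ∀ᶠ n in atTop, p n ≤ Real.exp (-∑ i ∈ Finset.range (k n), ε n i * κ n i) := by
    filter_upwards [hsmall] with n hn
    rw [hsum]
    exact s7_prod_upper _ fun i => (haM n i).trans_lt hn
  constructor
  · intro c hc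
    have hp : Tendsto p atTop (𝓝 (Real.exp (-c))) := by
      refine tendsto_of_tendsto_of_tendsto_of_le_of_le' (g := fun n =>
        Real.exp (-((∑ i ∈ Finset.range (k n), ε n i * κ n i) / (1 - ⨆ i : Fin (k n), ε n i))))
        ?_ ((Real.continuous_exp.tendsto _).comp hc.neg) ?_ hup
      · have h1 : Tendsto (fun n => 1 - ⨆ i : Fin (k n), ε n i) atTop (𝓝 1) := by
          simpa using hεmax.const_sub 1
        have h2 := hc.div h1 one_ne_zero
        rw [div_one] at h2
        exact (Real.continuous_exp.tendsto _).comp h2.neg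
      · filter_upwards [hsmall] with n hn
        rw [hsum]
        exact s7_prod_lower _ _ hn (ha0 n) (haM n)
    have hcase := fun f => s7_case_pos _ _ _ _ p νt1 νt2 hR hwtP hwtQ _ (Real.exp_pos _) hp f
    simp only [Real.log_exp] at hcase
    have hm : Measurable (fun x : EReal => x + ((-c : ℝ) : EReal)) := by fun_prop
    have hc0 : 0 ≤ c := ge_of_tendsto' hc fun n => by
      rw [hsum]; exact Finset.sum_nonneg fun i _ => ha0 n i
    have hmap : ∀ (ν : Measure EReal) (f : BoundedContinuousFunction EReal ℝ),
        ∫ x, f x ∂(ν.map (fun x : EReal => x + ((-c : ℝ) : EReal))) =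
          ∫ x, f (x + ((-c : ℝ) : EReal)) ∂ν := fun ν f =>
      integral_map hm.aemeasurable f.continuous.measurable.aestronglyMeasurable
    refine ⟨fun f => ?_, fun f => ?_⟩
    · rw [hmap]
      exact (hcase f).1
    · have hpm : IsProbabilityMeasure (νt2.map (fun x : EReal => x + ((-c : ℝ) : EReal))) :=
        Measure.isProbabilityMeasure_map hm.aemeasurable
      have hi : ∀ (ν : Measure EReal) [IsFiniteMeasure ν], Integrable (fun x => f x) ν :=
        fun ν _ => f.integrable ν
      rw [integral_add_measure ((hi _).smul_measure ENNReal.ofReal_ne_top)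
        ((hi _).smul_measure ENNReal.ofReal_ne_top), integral_smul_measure, integral_smul_measure,
        hmap, integral_dirac, ENNReal.toReal_ofReal (Real.exp_pos _).le,
        ENNReal.toReal_ofReal (by
          have : Real.exp (-c) ≤ 1 := Real.exp_le_one_iff.2 (by linarith)
          linarith), smul_eq_mul, smul_eq_mul]
      exact (hcase f).2
  · intro h
    suffices hs : ∀ f : BoundedContinuousFunction EReal ℝ,
        Tendsto (fun n => ∫ x, f x ∂(lawP P μ ε k n)) atTop (𝓝 (f ⊥)) ∧
        Tendsto (fun n => ∫ x, f x ∂(lawQ P μ ε k n)) atTop (𝓝 (f ⊤)) by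
      refine ⟨fun f => ?_, fun f => ?_⟩
      · rw [integral_dirac]; exact (hs f).1
      · rw [integral_dirac]; exact (hs f).2
    intro f
    rcases h with h | ⟨d1, d2⟩
    · refine s7_case_zero _ _ _ _ p hR ?_ f
      refine tendsto_of_tendsto_of_tendsto_of_le_of_le' tendsto_const_nhds
        (Real.tendsto_exp_neg_atTop_nhds_zero.comp h) ?_ hup
      exact hR.mono fun n h => h.2.2.1.le
    · have := s7_case_deg _ _ _ _ p νt1 νt2 hR hwtP hwtQ d1 d2 f
      exact ⟨(continuous_fst.tendsto _).comp this, (continuous_snd.tendsto _).comp this⟩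

end
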